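/- arXiv:2603.26215 — 5 statements merged into one kernel-verified Lean document; each statement's English description precedes it below -/
import Mathlib

section
/- Let (Ω, 𝒜) be a measurable space, let μ₁ and μ₂ be probability measures on Ω, and let ε ≥ 0 be a real number. If there exists a measurable function f : Ω → ℝ with f ≥ 0 pointwise, f integrable with respect to both μ₁ and μ₂, such that ∫ f dμ₁ > e^ε · ∫ f dμ₂, then there exists a measurable set A ⊆ Ω with (μ₁ A).toReal > e^ε · (μ₂ A).toReal, i.e. the ε-differential-privacy inequality is violated. -/
open MeasureTheory Real

theorem expectation_mismatch_refutes_dp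
    {Ω : Type*} [MeasurableSpace Ω] (μ₁ μ₂ : Measure Ω)
    [IsProbabilityMeasure μ₁] [IsProbabilityMeasure μ₂] (ε : ℝ) (hε : 0 ≤ ε)
    (f : Ω → ℝ) (hf : Measurable f) (hf0 : ∀ x, 0 ≤ f x)
    (hint₁ : Integrable f μ₁) (hint₂ : Integrable f μ₂)
    (hmismatch : ∫ x, f x ∂μ₁ > Real.exp ε * ∫ x, f x ∂μ₂) :
    ∃ A : Set Ω, MeasurableSet A ∧ (μ₁ A).toReal > Real.exp ε * (μ₂ A).toReal := by
  by_contra! h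
  have hle : μ₁ ≤ ENNReal.ofReal (Real.exp ε) • μ₂ := by
    refine Measure.le_iff.2 fun A hA => ?_
    have h1 := ENNReal.ofReal_le_ofReal (h A hA)
    rw [ENNReal.ofReal_mul (Real.exp_pos ε).le,
      ENNReal.ofReal_toReal (measure_ne_top μ₁ A),
      ENNReal.ofReal_toReal (measure_ne_top μ₂ A)] at h1
    simpa using h1
  have h2 : ∫ x, f x ∂μ₁ ≤ ∫ x, f x ∂(ENNReal.ofReal (Real.exp ε) • μ₂) :=
    integral_mono_measure hle (Filter.Eventually.of_forall hf0)
      (hint₂.smul_measure ENNReal.ofReal_ne_top)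
  rw [integral_smul_measure, ENNReal.toReal_ofReal (Real.exp_pos ε).le, smul_eq_mul] at h2
  linarith
end

section
/- Let (Ω, 𝒜) be a measurable space, let μ₁ and μ₂ be probability measures on Ω, let ε ≥ 0, and let f : Ω → ℝ be measurable, pointwise non-negative, and integrable with respect to both μ₁ and μ₂. Suppose real numbers L and U satisfy L ≤ ∫ f dμ₁, ∫ f dμ₂ ≤ U, and L > e^ε · U. Then there exists a measurable set A ⊆ Ω with (μ₁ A).toReal > e^ε · (μ₂ A).toReal. -/
open MeasureTheory Real

theorem expectation_bounds_witness_refutes_dp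
    {Ω : Type*} [MeasurableSpace Ω] (μ₁ μ₂ : Measure Ω)
    [IsProbabilityMeasure μ₁] [IsProbabilityMeasure μ₂] (ε : ℝ) (hε : 0 ≤ ε)
    (f : Ω → ℝ) (hf : Measurable f) (hf0 : ∀ x, 0 ≤ f x)
    (hint₁ : Integrable f μ₁) (hint₂ : Integrable f μ₂)
    (L U : ℝ) (hL : L ≤ ∫ x, f x ∂μ₁) (hU : ∫ x, f x ∂μ₂ ≤ U)
    (hLU : L > Real.exp ε * U) :
    ∃ A : Set Ω, MeasurableSet A ∧ (μ₁ A).toReal > Real.exp ε * (μ₂ A).toReal := by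
  by_contra! h
  have hle : μ₁ ≤ ENNReal.ofReal (Real.exp ε) • μ₂ := by
    refine Measure.le_iff.2 fun A hA => ?_
    have h1 := h A hA
    rw [Measure.smul_apply, smul_eq_mul, ← ENNReal.ofReal_toReal (measure_ne_top μ₁ A),
      ← ENNReal.ofReal_toReal (measure_ne_top μ₂ A), ← ENNReal.ofReal_mul (Real.exp_pos ε).le]
    exact ENNReal.ofReal_le_ofReal h1
  have h2 : ∫ x, f x ∂μ₁ ≤ ∫ x, f x ∂(ENNReal.ofReal (Real.exp ε) • μ₂) :=
    integral_mono_measure hle (Filter.Eventually.of_forall hf0)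
      (hint₂.smul_measure ENNReal.ofReal_ne_top)
  rw [integral_smul_measure, ENNReal.toReal_ofReal (Real.exp_pos ε).le, smul_eq_mul] at h2
  have h3 := mul_le_mul_of_nonneg_left hU (Real.exp_pos ε).le
  linarith
end

section
/- There exist probability measures μ₁ and μ₂ on ℝ and an integrable function f : ℝ → ℝ such that μ₁(A) ≤ 3 · μ₂(A) holds for every measurable set A, and yet ∫ f dμ₁ > e^ε · ∫ f dμ₂ holds for every ε ≥ 0. Concretely, one may take μ₁ = (3/4)·δ₀ + (1/4)·δ₁, μ₂ = (1/4)·δ₀ + (3/4)·δ₁, and f(x) = −x + 1/4, for which ∫ f dμ₁ = 0 and ∫ f dμ₂ = −1/2. -/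
open MeasureTheory Real

theorem aux_integrable (a b : ℝ) :
    Integrable (fun x : ℝ => -x + 1/4) ((ENNReal.ofReal a) • Measure.dirac (0 : ℝ)
            + (ENNReal.ofReal b) • Measure.dirac (1 : ℝ)) := by
  refine Integrable.add_measure ?_ ?_ <;>
  · refine Integrable.smul_measure ?_ ENNReal.ofReal_ne_top
    exact integrable_dirac (by simp [enorm_lt_top])

theorem aux_integral (a b : ℝ) (ha : 0 ≤ a) (hb : 0 ≤ b) :
    ∫ x, (-x + 1/4) ∂((ENNReal.ofReal a) • Measure.dirac (0 : ℝ)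
            + (ENNReal.ofReal b) • Measure.dirac (1 : ℝ)) = a * (1/4) + b * (-1 + 1/4) := by
  rw [integral_add_measure, integral_smul_measure, integral_smul_measure, integral_dirac,
    integral_dirac, ENNReal.toReal_ofReal ha, ENNReal.toReal_ofReal hb]
  · simp
  all_goals
    refine Integrable.smul_measure ?_ ENNReal.ofReal_ne_top
    exact integrable_dirac (by simp [enorm_lt_top])

theorem aux_prob (a b : ℝ) (ha : 0 ≤ a) (hb : 0 ≤ b) (h : a + b = 1) :
    IsProbabilityMeasure ((ENNReal.ofReal a) • Measure.dirac (0 : ℝ)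
            + (ENNReal.ofReal b) • Measure.dirac (1 : ℝ)) := by
  constructor
  simp [← ENNReal.ofReal_add ha hb, h]

theorem nonnegativity_necessary_for_soundness :
    ∃ (μ₁ μ₂ : Measure ℝ) (f : ℝ → ℝ),
      IsProbabilityMeasure μ₁ ∧ IsProbabilityMeasure μ₂ ∧
      Integrable f μ₁ ∧ Integrable f μ₂ ∧
      (∀ A : Set ℝ, MeasurableSet A → μ₁ A ≤ 3 * μ₂ A) ∧
      (∀ ε : ℝ, 0 ≤ ε → ∫ x, f x ∂μ₁ > Real.exp ε * ∫ x, f x ∂μ₂) ∧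
      μ₁ = (ENNReal.ofReal (3/4)) • Measure.dirac (0 : ℝ)
            + (ENNReal.ofReal (1/4)) • Measure.dirac (1 : ℝ) ∧
      μ₂ = (ENNReal.ofReal (1/4)) • Measure.dirac (0 : ℝ)
            + (ENNReal.ofReal (3/4)) • Measure.dirac (1 : ℝ) ∧
      f = (fun x => -x + 1/4) ∧
      (∫ x, f x ∂μ₁ = 0) ∧ (∫ x, f x ∂μ₂ = -(1/2)) := by
  refine ⟨_, _, _, aux_prob (3/4) (1/4) (by norm_num) (by norm_num) (by norm_num),
    aux_prob (1/4) (3/4) (by norm_num) (by norm_num) (by norm_num),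
    aux_integrable _ _, aux_integrable _ _, ?_, ?_, rfl, rfl, rfl, ?_, ?_⟩
  · intro A _
    have e1 : ENNReal.ofReal (3/4) = 3 * ENNReal.ofReal (1/4) := by
      rw [show (3/4 : ℝ) = 3 * (1/4) by norm_num, ENNReal.ofReal_mul (by norm_num)]
      simp
    have e2 : ENNReal.ofReal (1/4) ≤ 3 * ENNReal.ofReal (3/4) := by
      rw [show (3 : ENNReal) = ENNReal.ofReal 3 by simp, ← ENNReal.ofReal_mul (by norm_num)]
      exact ENNReal.ofReal_le_ofReal (by norm_num)
    simp only [Measure.add_apply, Measure.smul_apply, smul_eq_mul, mul_add, ← mul_assoc]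
    exact add_le_add (mul_le_mul_left e1.le _) (mul_le_mul_left e2 _)
  · intro ε _
    rw [aux_integral _ _ (by norm_num) (by norm_num), aux_integral _ _ (by norm_num) (by norm_num)]
    have := Real.exp_pos ε
    norm_num
    linarith
  · rw [aux_integral _ _ (by norm_num) (by norm_num)]; norm_num
  · rw [aux_integral _ _ (by norm_num) (by norm_num)]; norm_num
end

section
/- Let μ_q be the Laplace measure centered at q (Lebesgue measure with density x ↦ (1/2)·exp(−|x − q|)), and let f(y) = 2·y² + (9848/25)·y⁴. Then ∫ f dμ_{3/2} = 552316/25 (= 22092.64), ∫ f dμ_{5/2} = 1360052/25 (= 54402.08), and ∫ f dμ_{5/2} > (246/100) · ∫ f dμ_{3/2}; consequently, for every real ε with 0 ≤ ε < ln(2.46), one has ∫ f dμ_{5/2} > e^ε · ∫ f dμ_{3/2}. -/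
open MeasureTheory Real

noncomputable def laplaceMeasure (q : ℝ) : Measure ℝ :=
  volume.withDensity (fun x => ENNReal.ofReal ((1/2) * Real.exp (-|x - q|)))

lemma laplace_aux_Ioi (n : ℕ) :
    IntegrableOn (fun z : ℝ => z^n * Real.exp (-|z|)) (Set.Ioi 0) ∧
      ∫ z in Set.Ioi (0:ℝ), z^n * Real.exp (-|z|) = (n.factorial : ℝ) := by
  have hp : (0:ℝ) < (n:ℝ) + 1 := by positivity
  have heq : Set.EqOn (fun z : ℝ => Real.exp (-z) * z^(((n:ℝ)+1) - 1))
      (fun z : ℝ => z^n * Real.exp (-|z|)) (Set.Ioi 0) := by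
    intro z hz
    have hz' : (0:ℝ) < z := hz
    simp only [add_sub_cancel_right, Real.rpow_natCast, abs_of_pos hz']
    ring
  constructor
  · exact (Real.GammaIntegral_convergent hp).congr_fun heq measurableSet_Ioi
  · rw [← setIntegral_congr_fun measurableSet_Ioi heq, ← Real.Gamma_eq_integral hp,
      Real.Gamma_nat_eq_factorial]

lemma laplace_aux_Iic (n : ℕ) :
    IntegrableOn (fun z : ℝ => z^n * Real.exp (-|z|)) (Set.Iic 0) ∧
      ∫ z in Set.Iic (0:ℝ), z^n * Real.exp (-|z|) = (-1)^n * (n.factorial : ℝ) := by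
  have heq : (fun z : ℝ => z^n * Real.exp (-|z|)) =
      (fun z : ℝ => (fun w : ℝ => (-1)^n * (w^n * Real.exp (-|w|))) (-z)) := by
    funext z
    simp only [abs_neg]
    rw [← mul_assoc, ← mul_pow]
    simp
  constructor
  · rw [heq, integrableOn_Iic_iff_integrableOn_Iio]
    have h := (laplace_aux_Ioi n).1.const_mul ((-1)^n)
    have h2 : IntegrableOn (fun w : ℝ => (-1)^n * (w^n * Real.exp (-|w|))) (Set.Ioi (-0)) := by
      simpa [IntegrableOn] using h
    exact h2.comp_neg_Iio
  · rw [heq, integral_comp_neg_Iic (0:ℝ) (fun w : ℝ => (-1)^n * (w^n * Real.exp (-|w|))),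
      neg_zero, integral_const_mul, (laplace_aux_Ioi n).2]

lemma laplace_aux (n : ℕ) :
    Integrable (fun z : ℝ => z^n * Real.exp (-|z|)) ∧
      ∫ z : ℝ, z^n * Real.exp (-|z|) = (1 + (-1)^n) * (n.factorial : ℝ) := by
  have h1 := laplace_aux_Ioi n
  have h2 := laplace_aux_Iic n
  constructor
  · rw [← integrableOn_univ, ← Set.Iic_union_Ioi (a := (0:ℝ))]
    exact h2.1.union h1.1
  · rw [← intervalIntegral.integral_Iic_add_Ioi h2.1 h1.1, h1.2, h2.2]
    ring

lemma laplace_integral (q : ℝ) :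
    ∫ y, (2*y^2 + (9848/25)*y^4) ∂(laplaceMeasure q) =
      2*(q^2+2) + (9848/25)*(q^4+12*q^2+24) := by
  unfold laplaceMeasure
  rw [integral_withDensity_eq_integral_toReal_smul (by fun_prop)
    (Filter.Eventually.of_forall fun _ => ENNReal.ofReal_lt_top)]
  rw [← integral_add_right_eq_self _ q]
  have e : ∀ z : ℝ, (ENNReal.ofReal ((1/2) * Real.exp (-|z + q - q|))).toReal •
      (2*(z+q)^2 + (9848/25)*(z+q)^4) =
      (q^2 + (4924/25)*q^4) * (z^0 * Real.exp (-|z|)) +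
      ((2*q + 4*(4924/25)*q^3) * (z^1 * Real.exp (-|z|)) +
      ((1 + 6*(4924/25)*q^2) * (z^2 * Real.exp (-|z|)) +
      ((4*(4924/25)*q) * (z^3 * Real.exp (-|z|)) +
      (4924/25) * (z^4 * Real.exp (-|z|))))) := by
    intro z
    rw [ENNReal.toReal_ofReal (by positivity), add_sub_cancel_right, smul_eq_mul]
    ring
  simp_rw [e]
  have i0 := (laplace_aux 0).1.const_mul (q^2 + (4924/25)*q^4)
  have i1 := (laplace_aux 1).1.const_mul (2*q + 4*(4924/25)*q^3)
  have i2 := (laplace_aux 2).1.const_mul (1 + 6*(4924/25)*q^2)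
  have i3 := (laplace_aux 3).1.const_mul (4*(4924/25)*q)
  have i4 := (laplace_aux 4).1.const_mul (4924/25)
  rw [integral_add i0 (by fun_prop), integral_add i1 (by fun_prop),
    integral_add i2 (by fun_prop), integral_add i3 i4]
  simp only [integral_const_mul, (laplace_aux _).2]
  norm_num [Nat.factorial]
  ring

theorem histogram_expectation_mismatch_witness :
    let f : ℝ → ℝ := fun y => 2*y^2 + (9848/25)*y^4
    (∫ y, f y ∂(laplaceMeasure (3/2)) = 552316/25) ∧
      (∫ y, f y ∂(laplaceMeasure (5/2)) = 1360052/25) ∧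
      (∫ y, f y ∂(laplaceMeasure (5/2)) > (246/100) * ∫ y, f y ∂(laplaceMeasure (3/2))) ∧
      ∀ ε : ℝ, 0 ≤ ε → ε < Real.log (246/100) →
        ∫ y, f y ∂(laplaceMeasure (5/2)) > Real.exp ε * ∫ y, f y ∂(laplaceMeasure (3/2)) := by
  intro f
  have h1 : ∫ y, f y ∂(laplaceMeasure (3/2)) = 552316/25 := by
    rw [laplace_integral]; norm_num
  have h2 : ∫ y, f y ∂(laplaceMeasure (5/2)) = 1360052/25 := by
    rw [laplace_integral]; norm_num
  rw [h1, h2]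
  refine ⟨rfl, rfl, by norm_num, ?_⟩
  intro ε _ hε
  have h3 : Real.exp ε < 246/100 := (Real.lt_log_iff_exp_lt (by norm_num)).1 hε
  linarith
end

section
/- Let N_q denote the Gaussian probability measure on ℝ with mean q and variance 1 (Mathlib's gaussianReal q 1). Then for every real ε ≥ 0 there exists a measurable set A ⊆ ℝ such that N_1(A) > e^ε · N_0(A). Hence the Gaussian mechanism q ↦ N_q is not ε-differentially private for any ε ≥ 0 under the similarity relation |q₁ − q₂| ≤ 1. -/
open MeasureTheory ProbabilityTheory Real

theorem gaussian_mechanism_not_eps_DP :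
    ∀ ε : ℝ, 0 ≤ ε →
      ∃ A : Set ℝ, MeasurableSet A ∧
        gaussianReal 1 1 A > ENNReal.ofReal (Real.exp ε) * gaussianReal 0 1 A := by
  intro ε _
  refine ⟨Set.Ioi (ε + 1/2), measurableSet_Ioi, ?_⟩
  have hfin : ENNReal.ofReal (Real.exp ε) * gaussianReal 0 1 (Set.Ioi (ε + 1/2)) ≠ ⊤ :=
    ENNReal.mul_ne_top ENNReal.ofReal_ne_top (measure_ne_top _ _)
  rw [gaussianReal_apply 0 one_ne_zero, 
    ← lintegral_const_mul _ (measurable_gaussianPDF 0 1)] at hfin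
  rw [gt_iff_lt, gaussianReal_apply 0 one_ne_zero, gaussianReal_apply 1 one_ne_zero,
    ← lintegral_const_mul _ (measurable_gaussianPDF 0 1)]
  refine setLIntegral_strict_mono measurableSet_Ioi (by simp) (measurable_gaussianPDF 1 1)
    hfin (Filter.Eventually.of_forall fun x hx => ?_)
  rw [Set.mem_Ioi] at hx
  rw [gaussianPDF, gaussianPDF, ← ENNReal.ofReal_mul (Real.exp_pos _).le,
    ENNReal.ofReal_lt_ofReal_iff (gaussianPDFReal_pos _ _ _ one_ne_zero)]
  simp only [gaussianPDFReal]
  rw [mul_left_comm, ← Real.exp_add]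
  refine mul_lt_mul_of_pos_left (Real.exp_lt_exp.mpr ?_) (by positivity)
  push_cast
  nlinarith
end
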